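/- arXiv:2012.13515 — 2 statements merged into one kernel-verified Lean document; each statement's English description precedes it below -/
import Mathlib

section
/- Let E ⊆ ℝ² be compact, ε > 0, x ∈ ∂E_ε, and let ξ₁, ξ₂ belong to the interior, relative to S¹, of Ξ_x(E_ε). Then there exists r > 0 such that the truncated open cone V_r(x, ξ₁, ξ₂) := {x + s·v : v ∈ (ξ₁, ξ₂)_{S¹}, 0 < s < r} is contained in the complement E_ε^c. -/
open Metric Set Filter Topology RealInnerProductSpace

noncomputable section

/-- The Euclidean plane. -/
abbrev Plane := EuclideanSpace ℝ (Fin 2)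

/-- The closed ε-neighbourhood of a set `E ⊆ ℝ²`: the closure of the union of open
ε-balls centred at points of `E`. -/
def eNbhd (E : Set Plane) (ε : ℝ) : Set Plane :=
  closure (⋃ y ∈ E, ball y ε)

/-- The set of contributors of a boundary point `x ∈ ∂E_ε`: points `y ∈ ∂E` with
`‖y - x‖ = ε`. -/
def contributors (E : Set Plane) (ε : ℝ) (x : Plane) : Set Plane :=
  {y ∈ frontier E | ‖y - x‖ = ε}

/-- The set of outward directions from `E_ε` at `x`. -/
def outwardDirs (E : Set Plane) (ε : ℝ) (x : Plane) : Set Plane :=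
  {ξ | ‖ξ‖ = 1 ∧ ∃ u : ℕ → Plane, (∀ n, u n ∉ eNbhd E ε) ∧
    Tendsto u atTop (nhds x) ∧
    Tendsto (fun n => (‖u n - x‖)⁻¹ • (u n - x)) atTop (nhds ξ)}

/-- The set of extremal outward directions at `x`: outward directions perpendicular to
`y - x` for some contributor `y`. -/
def extOutward (E : Set Plane) (ε : ℝ) (x : Plane) : Set Plane :=
  {ξ ∈ outwardDirs E ε x | ∃ y ∈ contributors E ε x, ⟪y - x, ξ⟫ = 0}

/-- The set of extremal contributors at `x`: contributors perpendicular to some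
outward direction. -/
def extContrib (E : Set Plane) (ε : ℝ) (x : Plane) : Set Plane :=
  {y ∈ contributors E ε x | ∃ ξ ∈ outwardDirs E ε x, ⟪y - x, ξ⟫ = 0}

/-- The set of extremal pairs at `x`. -/
def extPairs (E : Set Plane) (ε : ℝ) (x : Plane) : Set (Plane × Plane) :=
  {p | p.1 ∈ outwardDirs E ε x ∧ p.2 ∈ contributors E ε x ∧ ⟪p.2 - x, p.1⟫ = 0}

/-- The set `Unp(E)` of boundary points of `E_ε` with a unique contributor. -/
def unp (E : Set Plane) (ε : ℝ) : Set Plane :=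
  {x ∈ frontier (eNbhd E ε) | ∃ y, contributors E ε x = {y}}

/-- A boundary point `x ∈ ∂E_ε` is smooth if `x ∈ Unp(E)` and a whole neighbourhood of
`x` on the boundary consists of points of `Unp(E)`. -/
def IsSmoothPt (E : Set Plane) (ε : ℝ) (x : Plane) : Prop :=
  x ∈ unp E ε ∧ ∃ r > 0, frontier (eNbhd E ε) ∩ ball x r ⊆ unp E ε

/-- A singularity: a non-smooth boundary point of `E_ε`. -/
def IsSingularity (E : Set Plane) (ε : ℝ) (x : Plane) : Prop :=
  x ∈ frontier (eNbhd E ε) ∧ ¬ IsSmoothPt E ε x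

/-- The open half-ball of radius `r` at `x` in direction `v`. -/
def halfBall (x v : Plane) (r : ℝ) : Set Plane :=
  {z ∈ ball x r | 0 < ⟪z - x, v⟫}

/-- `V` is a connected component of the complement of `E_ε`. -/
def IsCompOfCompl (E : Set Plane) (ε : ℝ) (V : Set Plane) : Prop :=
  ∃ z, z ∉ eNbhd E ε ∧ V = connectedComponentIn (eNbhd E ε)ᶜ z

/-- The closed geodesic arc-segment between `v, w ∈ S¹`. -/
def arcSeg (v w : Plane) : Set Plane :=
  {u | ‖u‖ = 1 ∧ ∃ a b : ℝ, 0 ≤ a ∧ 0 ≤ b ∧ u = a • v + b • w}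

/-- The open geodesic arc-segment between `v, w ∈ S¹`. -/
def openArc (v w : Plane) : Set Plane :=
  arcSeg v w \ {v, w}

/-- A chain sequence for `x`: a sequence of singularities converging to `x` whose
extremal contributors become increasingly opposed. -/
def IsChainSeq (E : Set Plane) (ε : ℝ) (x : Plane) (u : ℕ → Plane) : Prop :=
  (∀ n, IsSingularity E ε (u n)) ∧ (∀ n, u n ≠ x) ∧ Tendsto u atTop (nhds x) ∧
  ∃ y1 y2 : ℕ → Plane, (∀ n, extContrib E ε (u n) = {y1 n, y2 n}) ∧
    Tendsto (fun n => ⟪ε⁻¹ • (y1 n - u n), ε⁻¹ • (y2 n - u n)⟫) atTop (nhds (-1))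

/-- Type S1: wedge. -/
def IsWedge (E : Set Plane) (ε : ℝ) (x : Plane) : Prop :=
  IsSingularity E ε x ∧
  ∃ ξ₁ ξ₂, extOutward E ε x = {ξ₁, ξ₂} ∧ ξ₁ ≠ ξ₂ ∧ ξ₁ ≠ -ξ₂

/-- Type S2: one-sided sharp singularity. -/
def IsSharp (E : Set Plane) (ε : ℝ) (x : Plane) : Prop :=
  IsSingularity E ε x ∧ (∃ ξ, extOutward E ε x = {ξ}) ∧
  ∃ δ > 0, IsConnected (ball x δ ∩ (eNbhd E ε)ᶜ)

/-- Type S3: sharp-sharp singularity. -/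
def IsSharpSharp (E : Set Plane) (ε : ℝ) (x : Plane) : Prop :=
  IsSingularity E ε x ∧ ∃ ξ, extOutward E ε x = {ξ, -ξ} ∧
    ∀ η ∈ ({ξ, -ξ} : Set Plane), ∃ δ > 0, IsConnected (halfBall x η δ ∩ (eNbhd E ε)ᶜ)

/-- Type S4: one-sided shallow singularity. -/
def IsShallow (E : Set Plane) (ε : ℝ) (x : Plane) : Prop :=
  IsSingularity E ε x ∧ x ∈ unp E ε ∧
  ∃ ξ₁ ξ₂, extOutward E ε x = {ξ₁, ξ₂} ∧
    (∃ δ > 0, halfBall x ξ₁ δ ∩ frontier (eNbhd E ε) ⊆ unp E ε) ∧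
    (∀ δ > 0, ¬ (halfBall x ξ₂ δ ∩ frontier (eNbhd E ε) ⊆ unp E ε))

/-- Type S5: shallow-shallow singularity. -/
def IsShallowShallow (E : Set Plane) (ε : ℝ) (x : Plane) : Prop :=
  IsSingularity E ε x ∧ x ∈ unp E ε ∧
  ∃ ξ₁ ξ₂, extOutward E ε x = {ξ₁, ξ₂} ∧
    ∀ η ∈ ({ξ₁, ξ₂} : Set Plane), ∀ δ > 0,
      ¬ (halfBall x η δ ∩ frontier (eNbhd E ε) ⊆ unp E ε)

/-- Type S6: one-sided chain singularity. -/
def IsChainSing (E : Set Plane) (ε : ℝ) (x : Plane) : Prop :=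
  IsSingularity E ε x ∧ (∃ ξ, extOutward E ε x = {ξ}) ∧
  ∃ u, IsChainSeq E ε x u

/-- Type S7: chain-chain singularity. -/
def IsChainChain (E : Set Plane) (ε : ℝ) (x : Plane) : Prop :=
  IsSingularity E ε x ∧ ∃ ξ, extOutward E ε x = {ξ, -ξ} ∧
    ∀ η ∈ ({ξ, -ξ} : Set Plane), ∃ δ > 0, ∃ u,
      IsChainSeq E ε x u ∧ ∀ n, u n ∈ halfBall x η δ

/-- Type S8: sharp-chain singularity. -/
def IsSharpChain (E : Set Plane) (ε : ℝ) (x : Plane) : Prop :=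
  IsSingularity E ε x ∧ ∃ ξ, extOutward E ε x = {ξ, -ξ} ∧
    (∃ δ > 0, IsConnected (halfBall x ξ δ ∩ (eNbhd E ε)ᶜ)) ∧
    (∃ δ > 0, ∃ u, IsChainSeq E ε x u ∧ ∀ n, u n ∈ halfBall x (-ξ) δ)

/-- The interior of a subset of the unit circle, relative to the circle. -/
def intS1 (X : Set Plane) : Set Plane :=
  {ξ ∈ X | ∃ δ > 0, ∀ η : Plane, ‖η‖ = 1 → dist η ξ < δ → η ∈ X}

/-- Membership in the neighbourhood of a compact set. -/
theorem exists_of_mem_eNbhd {E : Set Plane} (hE : IsCompact E) {ε : ℝ} (hε : 0 < ε) {z : Plane}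
    (hz : z ∈ eNbhd E ε) : ∃ y ∈ E, dist z y ≤ ε := by
  unfold eNbhd at hz
  rw [← Metric.thickening_eq_biUnion_ball] at hz
  have h := Metric.closure_thickening_subset_cthickening ε E hz
  rw [hE.cthickening_eq_biUnion_closedBall hε.le] at h
  simpa using h

theorem mem_eNbhd_of_dist_le {E : Set Plane} {ε : ℝ} (hε : 0 < ε) {z y : Plane}
    (hy : y ∈ E) (h : dist z y ≤ ε) : z ∈ eNbhd E ε := by
  have h1 : z ∈ closure (ball y ε) := by
    rw [closure_ball y hε.ne']; exact h
  exact closure_mono (subset_biUnion_of_mem (u := fun y => ball y ε) hy) h1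

theorem le_dist_of_mem_frontier {E : Set Plane} {ε : ℝ} {x y : Plane}
    (hx : x ∈ frontier (eNbhd E ε)) (hy : y ∈ E) : ε ≤ dist x y := by
  by_contra! h
  refine hx.2 ?_
  have hs : ball y ε ⊆ eNbhd E ε :=
    (subset_biUnion_of_mem (u := fun y => ball y ε) hy).trans subset_closure
  exact interior_maximal hs isOpen_ball h

/-- Outward directions make a non-acute angle with every contributor. -/
theorem inner_nonpos_of_outward {E : Set Plane} {ε : ℝ} (hε : 0 < ε) {x y η : Plane}
    (hy : y ∈ E) (hxy : dist x y ≤ ε) (hη : η ∈ outwardDirs E ε x) : ⟪η, y - x⟫ ≤ 0 := by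
  obtain ⟨-, u, hu, hux, hd⟩ := hη
  have h1 : Tendsto (fun n => ⟪(‖u n - x‖)⁻¹ • (u n - x), y - x⟫) atTop (nhds ⟪η, y - x⟫) :=
    hd.inner tendsto_const_nhds
  have h2 : Tendsto (fun n => ‖u n - x‖ / 2) atTop (nhds 0) := by
    have h3 : Tendsto (fun n => ‖u n - x‖ / 2) atTop (nhds (‖x - x‖ / 2)) :=
      ((hux.sub_const x).norm).div_const 2
    simpa using h3
  refine le_of_tendsto_of_tendsto' h1 h2 fun n => ?_
  have h4 : ε < dist (u n) y := by
    by_contra! h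
    exact hu n (mem_eNbhd_of_dist_le hε hy h)
  have h5 : dist (u n) y = ‖(u n - x) - (y - x)‖ := by
    rw [dist_eq_norm]; congr 1; abel
  have h6 : dist x y = ‖y - x‖ := by rw [dist_comm, dist_eq_norm]
  have h7 := norm_sub_sq_real (u n - x) (y - x)
  rw [← h5, ← h6] at h7
  have h8 : (dist x y) ^ 2 < (dist (u n) y) ^ 2 := by
    have := dist_nonneg (x := x) (y := y)
    nlinarith
  rw [real_inner_smul_left]
  rcases (norm_nonneg (u n - x)).eq_or_lt with h0 | h0
  · rw [← h0]; simp
  · rw [inv_mul_le_iff₀ h0]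
    nlinarith

/-- Interior outward directions make a strictly obtuse angle with every contributor. -/
theorem inner_neg_of_interior {E : Set Plane} {ε : ℝ} (hε : 0 < ε) {x y ξ : Plane}
    (hx : x ∈ frontier (eNbhd E ε)) (hy : y ∈ E) (hxy : dist x y ≤ ε)
    (hξ : ξ ∈ intS1 (outwardDirs E ε x)) : ⟪ξ, y - x⟫ < 0 := by
  by_contra! hn
  obtain ⟨hξo, δ, hδ, hball⟩ := hξ
  have hξ1 : ‖ξ‖ = 1 := hξo.1
  set w := y - x with hw
  have hwpos : 0 < ‖w‖ := by
    have := le_dist_of_mem_frontier hx hy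
    rw [dist_comm, dist_eq_norm] at this
    linarith
  have hc : ContinuousAt (fun t : ℝ => (‖ξ + t • w‖)⁻¹ • (ξ + t • w)) 0 := by
    have h0 : ContinuousAt (fun t : ℝ => ξ + t • w) 0 := by fun_prop
    exact (h0.norm.inv₀ (by simp [hξ1])).smul h0
  have hc' : Tendsto (fun t : ℝ => (‖ξ + t • w‖)⁻¹ • (ξ + t • w)) (𝓝 0) (𝓝 ξ) := by
    have := hc.tendsto
    simpa [hξ1] using this
  have hev := (hc'.mono_left nhdsWithin_le_nhds : Tendsto _ (𝓝[>] (0:ℝ)) _).eventually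
    (Metric.ball_mem_nhds ξ hδ)
  obtain ⟨t, ht, htpos⟩ := (hev.and self_mem_nhdsWithin).exists
  have htpos : 0 < t := htpos
  have hin : 0 < ⟪ξ + t • w, w⟫ := by
    rw [inner_add_left, real_inner_smul_left, real_inner_self_eq_norm_sq]
    positivity
  have hne : ξ + t • w ≠ 0 := by
    intro h
    rw [h, inner_zero_left] at hin
    exact lt_irrefl _ hin
  have hnpos : 0 < ‖ξ + t • w‖ := norm_pos_iff.2 hne
  have hout := hball _ (by rw [norm_smul, norm_inv, norm_norm, inv_mul_cancel₀ hnpos.ne']) ht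
  have := inner_nonpos_of_outward hε hy hxy hout
  rw [real_inner_smul_left] at this
  have h2 : 0 < (‖ξ + t • w‖)⁻¹ * ⟪ξ + t • w, w⟫ := by positivity
  linarith

/-- Approximations of the outward cone: a truncated open cone over an open arc between
two interior outward directions lies in the complement of `E_ε`. -/
theorem truncated_cone_in_complement (E : Set Plane) (hE : IsCompact E) {ε : ℝ}
    (hε : 0 < ε) (x : Plane) (hx : x ∈ frontier (eNbhd E ε)) (ξ₁ ξ₂ : Plane)
    (h₁ : ξ₁ ∈ intS1 (outwardDirs E ε x)) (h₂ : ξ₂ ∈ intS1 (outwardDirs E ε x)) :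
    ∃ r > 0,
      {z : Plane | ∃ v ∈ openArc ξ₁ ξ₂, ∃ s : ℝ, 0 < s ∧ s < r ∧ z = x + s • v} ⊆
        (eNbhd E ε)ᶜ := by
  have hKc : IsCompact {y ∈ E | 0 ≤ ⟪ξ₁, y - x⟫ ∨ 0 ≤ ⟪ξ₂, y - x⟫} := by
    refine hE.inter_right ?_
    have hcl : ∀ ξ : Plane, IsClosed {y : Plane | 0 ≤ ⟪ξ, y - x⟫} := fun ξ =>
      isClosed_le (f := fun _ : Plane => (0 : ℝ)) (g := fun y : Plane => ⟪ξ, y - x⟫)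
        continuous_const (by fun_prop)
    exact (hcl ξ₁).union (hcl ξ₂)
  set K : Set Plane := {y ∈ E | 0 ≤ ⟪ξ₁, y - x⟫ ∨ 0 ≤ ⟪ξ₂, y - x⟫} with hK
  have hfar : ∀ y ∈ K, ε < dist x y := by
    rintro y ⟨hy, h⟩
    by_contra! hle
    have a1 := inner_neg_of_interior hε hx hy hle h₁
    have a2 := inner_neg_of_interior hε hx hy hle h₂
    rcases h with h | h <;> linarith
  obtain ⟨r, hr, hKr⟩ : ∃ r > 0, ∀ y ∈ K, ε + r ≤ dist x y := by
    rcases K.eq_empty_or_nonempty with he | hne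
    · exact ⟨1, one_pos, by simp [he]⟩
    · obtain ⟨y0, hy0, hmin⟩ := hKc.exists_isMinOn hne
        (f := fun y => dist x y) (by fun_prop)
      refine ⟨dist x y0 - ε, sub_pos.2 (hfar y0 hy0), fun y hy => ?_⟩
      have : dist x y0 ≤ dist x y := hmin hy
      linarith
  refine ⟨r, hr, ?_⟩
  rintro z ⟨v, ⟨⟨hv1, a, b, ha, hb, hv⟩, -⟩, s, hs, hsr, rfl⟩ hz
  obtain ⟨y, hy, hd⟩ := exists_of_mem_eNbhd hE hε hz
  have e1 : dist x (x + s • v) = s := by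
    rw [dist_eq_norm]; simp [norm_smul, hv1, abs_of_pos hs]
  have hyK : y ∉ K := by
    intro h
    have := hKr y h
    have := dist_triangle x (x + s • v) y
    linarith
  have hneg : ⟪ξ₁, y - x⟫ < 0 ∧ ⟪ξ₂, y - x⟫ < 0 := by
    constructor
    · by_contra! h
      exact hyK ⟨hy, Or.inl h⟩
    · by_contra! h
      exact hyK ⟨hy, Or.inr h⟩
  have hvin : ⟪v, y - x⟫ ≤ 0 := by
    rw [hv, inner_add_left, real_inner_smul_left, real_inner_smul_left]
    nlinarith [hneg.1, hneg.2]
  have h5 : dist (x + s • v) y = ‖s • v - (y - x)‖ := by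
    rw [dist_eq_norm]; congr 1; abel
  have h6 : dist x y = ‖y - x‖ := by rw [dist_comm, dist_eq_norm]
  have h7 := norm_sub_sq_real (s • v) (y - x)
  rw [← h5, ← h6, real_inner_smul_left, norm_smul, hv1, Real.norm_eq_abs, abs_of_pos hs] at h7
  have h8 := le_dist_of_mem_frontier hx hy
  have h9 : dist (x + s • v) y ^ 2 ≤ ε ^ 2 := pow_le_pow_left₀ dist_nonneg hd 2
  have h10 : ε ^ 2 ≤ dist x y ^ 2 := pow_le_pow_left₀ hε.le h8 2
  nlinarith [mul_nonneg hs.le (neg_nonneg.2 hvin)]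

end
end

section
/- Let E ⊆ ℝ² be compact, ε > 0, and let x ∈ ∂E_ε be either a wedge or a point of Unp(E). Then there exists exactly one connected component V of the complement E_ε^c with x ∈ ∂V. -/
open Metric Set Filter Topology RealInnerProductSpace

noncomputable section

theorem not_mem_eNbhd_iff {E : Set Plane} (hE : IsCompact E) {ε : ℝ} (hε : 0 < ε) (z : Plane) :
    z ∉ eNbhd E ε ↔ ∀ y ∈ E, ε < ‖z - y‖ := by
  have h : eNbhd E ε = ⋃ y ∈ E, closedBall y ε := by
    rw [← hE.cthickening_eq_biUnion_closedBall hε.le, ← closure_thickening hε,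
      thickening_eq_biUnion_ball]
    rfl
  rw [h]
  simp [dist_eq_norm]

theorem isOpen_compl_eNbhd (E : Set Plane) (ε : ℝ) : IsOpen (eNbhd E ε)ᶜ :=
  isClosed_closure.isOpen_compl

theorem le_of_frontier {E : Set Plane} (hE : IsCompact E) {ε : ℝ} (hε : 0 < ε) {x : Plane}
    (hx : x ∈ frontier (eNbhd E ε)) : ∀ y ∈ E, ε ≤ ‖x - y‖ := by
  intro y hy
  rw [frontier_eq_closure_inter_closure] at hx
  have hsub : closure (eNbhd E ε)ᶜ ⊆ {z | ε ≤ ‖z - y‖} := by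
    apply closure_minimal
    · intro z hz
      exact ((not_mem_eNbhd_iff hE hε z).1 hz y hy).le
    · exact isClosed_le continuous_const (by fun_prop)
  exact hsub hx.2

theorem mem_contributors {E : Set Plane} (hE : IsCompact E) {ε : ℝ} (hε : 0 < ε) {x : Plane}
    (hx : x ∈ frontier (eNbhd E ε)) {y : Plane} (hy : y ∈ E) (hxy : ‖y - x‖ = ε) :
    y ∈ contributors E ε x := by
  refine ⟨⟨subset_closure hy, fun hint => ?_⟩, hxy⟩
  have h1 : E ⊆ (ball x ε)ᶜ := by
    intro z hz hzb
    have := le_of_frontier hE hε hx z hz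
    rw [mem_ball, dist_eq_norm, norm_sub_rev] at hzb
    linarith
  have h2 := interior_mono h1 hint
  rw [interior_compl, closure_ball x hε.ne'] at h2
  apply h2
  rw [mem_closedBall, dist_eq_norm, hxy]

theorem norm_sq_shift (p w y : Plane) (t : ℝ) :
    ‖p + t • w - y‖ ^ 2 = ‖p - y‖ ^ 2 + 2 * t * ⟪w, p - y⟫ + t ^ 2 * ‖w‖ ^ 2 := by
  have : p + t • w - y = (p - y) + t • w := by abel
  rw [this, norm_add_sq_real, inner_smul_right, norm_smul, mul_pow, Real.norm_eq_abs, sq_abs,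
    real_inner_comm]
  ring

theorem outward_inner_nonpos {E : Set Plane} (hE : IsCompact E) {ε : ℝ} (hε : 0 < ε)
    {x ξ y : Plane} (hξ : ξ ∈ outwardDirs E ε x) (hy : y ∈ E) (hxy : ‖y - x‖ = ε) :
    ⟪y - x, ξ⟫ ≤ 0 := by
  obtain ⟨-, u, hu, hux, hud⟩ := hξ
  have h1 : Tendsto (fun n => ⟪y - x, (‖u n - x‖)⁻¹ • (u n - x)⟫) atTop (nhds ⟪y - x, ξ⟫) :=
    tendsto_const_nhds.inner hud
  have h2 : Tendsto (fun n => ‖u n - x‖ / 2) atTop (nhds (‖x - x‖ / 2)) :=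
    ((hux.sub_const x).norm).div_const 2
  rw [sub_self, norm_zero, zero_div] at h2
  refine le_of_tendsto_of_tendsto' h1 h2 fun n => ?_
  have h3 := (not_mem_eNbhd_iff hE hε _).1 (hu n) y hy
  have h4 : ‖u n - y‖ ^ 2 = ‖u n - x‖ ^ 2 - 2 * ⟪y - x, u n - x⟫ + ε ^ 2 := by
    have : u n - y = (u n - x) - (y - x) := by abel
    rw [this, norm_sub_sq_real, hxy, real_inner_comm]
  have h5 : ⟪y - x, u n - x⟫ ≤ ‖u n - x‖ ^ 2 / 2 := by nlinarith
  rw [inner_smul_right]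
  rcases (norm_nonneg (u n - x)).eq_or_lt with h | h
  · rw [← h]; simp
  · rw [inv_mul_le_iff₀ h]; linarith

/-- If all points of `E` at distance `ε` lie strictly opposite to a direction `w`, the complement
is locally inside a single component. -/
theorem main_aux {E : Set Plane} (hE : IsCompact E) {ε : ℝ} (hε : 0 < ε) {x : Plane}
    (hx : x ∈ frontier (eNbhd E ε)) (w : Plane)
    (hw : ∀ y ∈ E, ‖y - x‖ = ε → ⟪w, y - x⟫ < 0) :
    ∃! V, IsCompOfCompl E ε V ∧ x ∈ frontier V := by
  have hle := le_of_frontier hE hε hx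
  obtain ⟨m, hm, hmE⟩ : ∃ m > 0, ∀ y ∈ E, ε + m ≤ ‖x - y‖ ∨ m ≤ ⟪w, x - y⟫ := by
    rcases E.eq_empty_or_nonempty with rfl | hne
    · exact ⟨1, one_pos, by simp⟩
    obtain ⟨y₀, hy₀, hmin⟩ := hE.exists_isMinOn hne
      (f := fun y => max (‖x - y‖ - ε) ⟪w, x - y⟫) (by fun_prop)
    refine ⟨max (‖x - y₀‖ - ε) ⟪w, x - y₀⟫, ?_, fun y hy => ?_⟩
    · rcases (hle y₀ hy₀).eq_or_lt with h | h
      · have := hw y₀ hy₀ (by rw [norm_sub_rev, h])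
        rw [← neg_sub, inner_neg_right] at this
        exact lt_max_of_lt_right (by linarith)
      · exact lt_max_of_lt_left (by linarith)
    · have := isMinOn_iff.1 hmin y hy
      rcases le_max_iff.1 this with h | h
      · left; linarith
      · right; exact h
  set T : ℝ := m / (2 * (‖w‖ + 1)) with hT
  have hw0 := norm_nonneg w
  have hTpos : 0 < T := by positivity
  have hTw : T * ‖w‖ + T = m / 2 := by rw [hT]; field_simp
  -- pushing along `w`
  have key : ∀ p : Plane, ‖p - x‖ < T → ∀ t : ℝ, 0 ≤ t → t ≤ T → ∀ y ∈ E, ε ≤ ‖p - y‖ →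
      (0 < t ∨ ε < ‖p - y‖) → ε < ‖p + t • w - y‖ := by
    intro p hp t ht0 htT y hy hpy hor
    rcases hmE y hy with h | h
    · have h1 : ‖x - y‖ ≤ ‖p + t • w - y‖ + ‖p - x‖ + t * ‖w‖ := by
        have e : x - y = (p + t • w - y) - (p - x) - t • w := by abel
        calc ‖x - y‖ = ‖(p + t • w - y) - (p - x) - t • w‖ := by rw [← e]
          _ ≤ ‖(p + t • w - y) - (p - x)‖ + ‖t • w‖ := norm_sub_le _ _
          _ ≤ ‖p + t • w - y‖ + ‖p - x‖ + ‖t • w‖ := by gcongr; exact norm_sub_le _ _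
          _ = _ := by rw [norm_smul, Real.norm_of_nonneg ht0]
      have h2 : t * ‖w‖ ≤ T * ‖w‖ := by gcongr
      linarith
    · have h1 : 0 < ⟪w, p - y⟫ := by
        have e : p - y = (p - x) + (x - y) := by abel
        rw [e, inner_add_right]
        have h2 := (abs_le.1 (abs_real_inner_le_norm w (p - x))).1
        have h3 : ‖w‖ * ‖p - x‖ ≤ ‖w‖ * T := by gcongr
        nlinarith
      have h2 := norm_sq_shift p w y t
      have h3 : 0 ≤ t ^ 2 * ‖w‖ ^ 2 := by positivity
      apply lt_of_pow_lt_pow_left₀ 2 (norm_nonneg _)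
      rw [h2]
      rcases hor with h4 | h4
      · have := mul_pos h4 h1
        nlinarith
      · have := mul_nonneg ht0 h1.le
        nlinarith
  set q : Plane := x + T • w with hq
  have hqc : q ∈ (eNbhd E ε)ᶜ := by
    refine (not_mem_eNbhd_iff hE hε _).2 fun y hy => ?_
    exact key x (by simpa using hTpos) T hTpos.le le_rfl y hy (hle y hy) (Or.inl hTpos)
  obtain ⟨δ', hδ', hball⟩ := Metric.isOpen_iff.1 (isOpen_compl_eNbhd E ε) q hqc
  have hδ : 0 < min δ' T := lt_min hδ' hTpos
  have hcomp : ∀ p ∈ ball x (min δ' T), p ∉ eNbhd E ε →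
      connectedComponentIn (eNbhd E ε)ᶜ p = connectedComponentIn (eNbhd E ε)ᶜ q := by
    intro p hp hpc
    rw [mem_ball, dist_eq_norm, lt_min_iff] at hp
    have hseg : segment ℝ p (p + T • w) ⊆ (eNbhd E ε)ᶜ := by
      rw [segment_eq_image']
      rintro _ ⟨θ, ⟨h0, h1⟩, rfl⟩
      refine (not_mem_eNbhd_iff hE hε _).2 fun y hy => ?_
      have h2 := (not_mem_eNbhd_iff hE hε _).1 hpc y hy
      have := key p hp.2 (θ * T) (by positivity) (by nlinarith) y hy h2.le (Or.inr h2)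
      simpa [smul_smul] using this
    have e1 : p + T • w ∈ connectedComponentIn (eNbhd E ε)ᶜ p :=
      (convex_segment p (p + T • w)).isPreconnected.subset_connectedComponentIn
        (left_mem_segment ℝ _ _) hseg (right_mem_segment ℝ _ _)
    have e2 : p + T • w ∈ connectedComponentIn (eNbhd E ε)ᶜ q :=
      (convex_ball q δ').isPreconnected.subset_connectedComponentIn
        (mem_ball_self hδ') hball (by
          rw [mem_ball, dist_eq_norm, hq, add_sub_add_right_eq_sub]; exact hp.1)
    rw [connectedComponentIn_eq e1, connectedComponentIn_eq e2]
  have hxc : x ∈ closure (eNbhd E ε)ᶜ := by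
    rw [frontier_eq_closure_inter_closure] at hx; exact hx.2
  have hxE : x ∈ eNbhd E ε := by
    have hcl : IsClosed (eNbhd E ε) := isClosed_closure
    exact hcl.frontier_subset hx
  refine ⟨connectedComponentIn (eNbhd E ε)ᶜ q, ⟨⟨q, hqc, rfl⟩, ?_⟩, ?_⟩
  · refine ⟨?_, fun h => (connectedComponentIn_subset _ _ (interior_subset h)) hxE⟩
    rw [Metric.mem_closure_iff]
    intro r hr
    obtain ⟨p, hp, hpd⟩ := Metric.mem_closure_iff.1 hxc (min r (min δ' T)) (lt_min hr hδ)
    refine ⟨p, ?_, hpd.trans_le (min_le_left _ _)⟩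
    rw [← hcomp p (by rw [mem_ball, dist_comm]; exact hpd.trans_le (min_le_right _ _)) hp]
    exact mem_connectedComponentIn hp
  · rintro V ⟨⟨z, hz, rfl⟩, hV⟩
    obtain ⟨p, hp, hpd⟩ := Metric.mem_closure_iff.1 hV.1 _ hδ
    rw [connectedComponentIn_eq hp]
    exact hcomp p (by rwa [mem_ball, dist_comm]) (connectedComponentIn_subset _ _ hp)

/-- In the plane, a vector orthogonal to two unit vectors that are not parallel vanishes. -/
theorem eq_zero_of_orthogonal {v ξ₁ ξ₂ : Plane} (h₁ : ‖ξ₁‖ = 1) (h₂ : ‖ξ₂‖ = 1)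
    (hne : ξ₁ ≠ ξ₂) (hne' : ξ₁ ≠ -ξ₂) (hv₁ : ⟪v, ξ₁⟫ = 0) (hv₂ : ⟪v, ξ₂⟫ = 0) : v = 0 := by
  have n1 : ξ₁ 0 ^ 2 + ξ₁ 1 ^ 2 = 1 := by
    have := EuclideanSpace.real_norm_sq_eq ξ₁
    rw [h₁, Fin.sum_univ_two] at this; linarith
  have n2 : ξ₂ 0 ^ 2 + ξ₂ 1 ^ 2 = 1 := by
    have := EuclideanSpace.real_norm_sq_eq ξ₂
    rw [h₂, Fin.sum_univ_two] at this; linarith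
  simp only [PiLp.inner_apply, Fin.sum_univ_two, RCLike.inner_apply, conj_trivial] at hv₁ hv₂
  have hd : ξ₁ 0 * ξ₂ 1 - ξ₁ 1 * ξ₂ 0 ≠ 0 := by
    intro hd
    have hs : (ξ₁ 0 * ξ₂ 0 + ξ₁ 1 * ξ₂ 1) ^ 2 = 1 := by
      linear_combination (ξ₂ 0 ^ 2 + ξ₂ 1 ^ 2) * n1 + n2
        - (ξ₁ 0 * ξ₂ 1 - ξ₁ 1 * ξ₂ 0) * hd
    rcases eq_or_eq_neg_of_sq_eq_sq (ξ₁ 0 * ξ₂ 0 + ξ₁ 1 * ξ₂ 1) (1 : ℝ)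
        (by rw [hs, one_pow]) with h | h
    · apply hne
      have h0 : (ξ₁ 0 - ξ₂ 0) ^ 2 + (ξ₁ 1 - ξ₂ 1) ^ 2 = 0 := by
        linear_combination n1 + n2 - 2 * h
      ext i
      fin_cases i
      · show ξ₁ 0 = ξ₂ 0
        nlinarith [sq_nonneg (ξ₁ 0 - ξ₂ 0), sq_nonneg (ξ₁ 1 - ξ₂ 1)]
      · show ξ₁ 1 = ξ₂ 1
        nlinarith [sq_nonneg (ξ₁ 0 - ξ₂ 0), sq_nonneg (ξ₁ 1 - ξ₂ 1)]
    · apply hne'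
      have h0 : (ξ₁ 0 + ξ₂ 0) ^ 2 + (ξ₁ 1 + ξ₂ 1) ^ 2 = 0 := by
        linear_combination n1 + n2 + 2 * h
      ext i
      fin_cases i
      · show ξ₁ 0 = - ξ₂ 0
        nlinarith [sq_nonneg (ξ₁ 0 + ξ₂ 0), sq_nonneg (ξ₁ 1 + ξ₂ 1)]
      · show ξ₁ 1 = - ξ₂ 1
        nlinarith [sq_nonneg (ξ₁ 0 + ξ₂ 0), sq_nonneg (ξ₁ 1 + ξ₂ 1)]
  ext i
  fin_cases i
  · show v 0 = 0
    apply mul_left_cancel₀ hd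
    linear_combination ξ₂ 1 * hv₁ - ξ₁ 1 * hv₂
  · show v 1 = 0
    apply mul_left_cancel₀ hd
    linear_combination ξ₁ 0 * hv₂ - ξ₂ 0 * hv₁

/-- Unique connected component: a wedge or a point of `Unp(E)` lies on the boundary of
exactly one connected component of the complement of `E_ε`. -/
theorem unique_connected_component (E : Set Plane) (hE : IsCompact E) {ε : ℝ}
    (hε : 0 < ε) (x : Plane) (hx : IsWedge E ε x ∨ x ∈ unp E ε) :
    ∃! V, IsCompOfCompl E ε V ∧ x ∈ frontier V := by
  rcases hx with ⟨⟨hx, -⟩, ξ₁, ξ₂, hext, hne, hne'⟩ | ⟨hx, y₀, hy₀⟩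
  · have m1 : ξ₁ ∈ extOutward E ε x := by rw [hext]; simp
    have m2 : ξ₂ ∈ extOutward E ε x := by rw [hext]; simp
    refine main_aux hE hε hx (ξ₁ + ξ₂) fun y hy hxy => ?_
    have i1 := outward_inner_nonpos hE hε m1.1 hy hxy
    have i2 := outward_inner_nonpos hE hε m2.1 hy hxy
    rw [real_inner_comm, inner_add_right]
    by_contra hcon
    have : y - x = 0 := eq_zero_of_orthogonal m1.1.1 m2.1.1 hne hne'
      (by linarith) (by linarith)
    rw [this, norm_zero] at hxy
    linarith
  · refine main_aux hE hε hx (x - y₀) fun y hy hxy => ?_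
    have hm := mem_contributors hE hε hx hy hxy
    rw [hy₀, mem_singleton_iff] at hm
    subst hm
    rw [← neg_sub y x, inner_neg_left, real_inner_self_eq_norm_sq, hxy]
    have := pow_pos hε 2
    linarith

end
end
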